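/- arXiv:math/0412003 — 3 statements merged into one kernel-verified Lean document; each statement's English description precedes it below -/
import Mathlib

section
/- The sequence (2^n)_{n≥1} is Benford base 10: for every s ∈ [1,10), the natural density of {n : M_10(2^n) ∈ [1,s]} equals log_10 s. -/
/-!
The mantissa of `2 ^ (n + 1)` is `10 ^ {(n + 1) α}`, where `α = log₁₀ 2` and `{·}` is the fractional
part, so it lies in `[1, s]` exactly when `{(n + 1) α} ≤ log₁₀ s`. The number `α` is irrational
because `2 ^ b = 10 ^ a` with `a > 0` is impossible modulo `5`, and the theorem becomes an instance
of Weyl's equidistribution theorem for irrational rotations of the circle `ℝ / ℤ`.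

Equidistribution is proved as weak convergence of the empirical measures of the points
`α, 2α, …, (N + 1)α` to Lebesgue measure on the circle (`tendsto_empiricalMeasure`). The linear span
of the Fourier monomials is a star subalgebra that separates points and the circle is compact, so it
is enough to test against one monomial `e_k`. For `k ≠ 0` the averages of `e_k` are geometric sums
with ratio `e_k(α) ≠ 1` divided by `N + 1`, hence tend to `0 = ∫ e_k`. Since the boundary of the arc
`[0, t]` consists of at most two points, the portmanteau theorem gives convergence of the masses of
this arc (`hasNatDensity_fract_le`).
-/

open scoped Classical

/-- The mantissa of `x` base `B`: the unique value in `[1, B)` such that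
`x = mantissa B x * B ^ k` for some integer `k` (for `B > 1`, `x > 0`). -/
noncomputable def mantissa (B x : ℝ) : ℝ := x / B ^ ⌊Real.logb B x⌋

/-- `A ⊆ ℕ` has natural density `d`. -/
def HasNatDensity (A : Set ℕ) (d : ℝ) : Prop :=
  Filter.Tendsto (fun T : ℕ => (((Finset.range T).filter (fun n => n ∈ A)).card : ℝ) / T)
    Filter.atTop (nhds d)

open MeasureTheory Filter Topology

/-! ### Empirical measures of a rotation -/

/-- The uniform probability measure on the points `α, 2α, …, (N + 1)α` of the circle `ℝ / ℤ`,
counted with multiplicity. Using `N + 1` points avoids the empty average. -/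
noncomputable def empiricalMeasure (α : ℝ) (N : ℕ) : Measure (AddCircle (1 : ℝ)) :=
  ((N + 1 : ℕ) : ENNReal)⁻¹ •
    ∑ n ∈ Finset.range (N + 1), Measure.dirac (((n + 1 : ℕ) * α : ℝ) : AddCircle (1 : ℝ))

instance (α : ℝ) (N : ℕ) : IsProbabilityMeasure (empiricalMeasure α N) where
  measure_univ := by
    simp only [empiricalMeasure, Measure.smul_apply, Measure.finsetSum_apply, measure_univ,
      Finset.sum_const, Finset.card_range, smul_eq_mul, nsmul_eq_mul, mul_one]
    exact ENNReal.inv_mul_cancel (by simp) (ENNReal.natCast_ne_top _)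

instance : IsProbabilityMeasure (volume : Measure (AddCircle (1 : ℝ))) where
  measure_univ := by simp

lemma integral_empiricalMeasure (α : ℝ) (N : ℕ) (f : C(AddCircle (1 : ℝ), ℂ)) :
    ∫ x, f x ∂(empiricalMeasure α N) =
      ((N + 1 : ℕ) : ℂ)⁻¹ *
        ∑ n ∈ Finset.range (N + 1), f (((n + 1 : ℕ) * α : ℝ) : AddCircle (1 : ℝ)) := by
  rw [empiricalMeasure, integral_smul_measure, integral_finsetSum_measure]
  · simp only [integral_dirac, ENNReal.toReal_inv, ENNReal.toReal_natCast, Complex.real_smul]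
    push_cast
    rfl
  · intro n _
    exact integrable_dirac (by simp)

lemma empiricalMeasure_apply (α : ℝ) (N : ℕ) {S : Set (AddCircle (1 : ℝ))}
    (hS : MeasurableSet S) :
    (empiricalMeasure α N S).toReal =
      (((Finset.range (N + 1)).filter
        (fun n : ℕ => (((n + 1 : ℕ) * α : ℝ) : AddCircle (1 : ℝ)) ∈ S)).card : ℝ) /
        ((N + 1 : ℕ) : ℝ) := by
  simp only [empiricalMeasure, Measure.smul_apply, Measure.finsetSum_apply, smul_eq_mul,
    Measure.dirac_apply' _ hS, Set.indicator_apply, Pi.one_apply, Finset.sum_boole,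
    ENNReal.toReal_mul, ENNReal.toReal_inv, ENNReal.toReal_natCast]
  rw [mul_comm, div_eq_mul_inv]

/-! ### Weyl's criterion -/

/-- A nontrivial character of the circle is not `1` at an irrational rotation angle: this is
where irrationality enters. -/
lemma fourier_irrational_ne_one {α : ℝ} (hα : Irrational α) {k : ℤ} (hk : k ≠ 0) :
    fourier k (α : AddCircle (1 : ℝ)) ≠ 1 := by
  rw [fourier_apply]
  intro h
  have h1 : AddCircle.toCircle (k • (α : AddCircle (1 : ℝ))) =
      AddCircle.toCircle (0 : AddCircle (1 : ℝ)) := by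
    rw [AddCircle.toCircle_zero]
    exact Circle.coe_eq_one.1 h
  have h2 := AddCircle.injective_toCircle one_ne_zero h1
  rw [← AddCircle.coe_zsmul, AddCircle.coe_eq_zero_iff] at h2
  obtain ⟨m, hm⟩ := h2
  refine (hα.intCast_mul hk).ne_int m ?_
  simpa using hm.symm

lemma integral_fourier {k : ℤ} (hk : k ≠ 0) :
    ∫ x : AddCircle (1 : ℝ), fourier k x = 0 :=
  integral_eq_zero_of_add_right_eq_neg (fourier_add_half_inv_index hk one_pos)

lemma tendsto_integral_fourier {α : ℝ} (hα : Irrational α) (k : ℤ) :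
    Tendsto (fun N => ∫ x, fourier k x ∂(empiricalMeasure α N)) atTop
      (𝓝 (∫ x : AddCircle (1 : ℝ), fourier k x)) := by
  rcases eq_or_ne k 0 with rfl | hk
  · simp
  rw [integral_fourier hk]
  simp only [integral_empiricalMeasure]
  set z : ℂ := fourier k (α : AddCircle (1 : ℝ)) with hz
  have hz1 : z ≠ 1 := fourier_irrational_ne_one hα hk
  have hnorm : ‖z‖ = 1 := by rw [hz, fourier_apply]; exact Circle.norm_coe _
  have hpow (n : ℕ) : fourier k (((n + 1 : ℕ) * α : ℝ) : AddCircle (1 : ℝ)) = z * z ^ n := by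
    rw [← nsmul_eq_mul, AddCircle.coe_nsmul, fourier_apply, smul_comm, AddCircle.toCircle_nsmul,
      Circle.coe_pow, pow_succ', hz, fourier_apply]
  simp only [hpow, ← Finset.mul_sum, geom_sum_eq hz1]
  have hbd (N : ℕ) : ‖z * ((z ^ (N + 1) - 1) / (z - 1))‖ ≤ 2 / ‖z - 1‖ := by
    rw [norm_mul, norm_div, hnorm, one_mul]
    gcongr
    calc ‖z ^ (N + 1) - 1‖ ≤ ‖z ^ (N + 1)‖ + ‖(1 : ℂ)‖ := norm_sub_le _ _
      _ = 2 := by rw [norm_pow, hnorm]; norm_num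
  have h0 : Tendsto (fun N : ℕ => ((N + 1 : ℕ) : ℂ)⁻¹) atTop (𝓝 0) :=
    (tendsto_inv_atTop_nhds_zero_nat (𝕜 := ℂ)).comp (tendsto_add_atTop_nat 1)
  exact h0.zero_mul_isBoundedUnder_le (isBoundedUnder_of ⟨_, hbd⟩)

/-- Weyl's equidistribution theorem for an irrational rotation, as weak convergence of measures. -/
theorem tendsto_empiricalMeasure {α : ℝ} (hα : Irrational α) :
    Tendsto (β := ProbabilityMeasure (AddCircle (1 : ℝ)))
      (fun N => ⟨empiricalMeasure α N, inferInstance⟩) atTop (𝓝 ⟨volume, inferInstance⟩) := by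
  -- The separation theorem is stated for bounded continuous functions, so the trigonometric
  -- polynomials are pulled back along `(E →ᵇ ℂ) → C(E, ℂ)`.
  refine ProbabilityMeasure.tendsto_of_tight_of_separatesPoints ℂ
    IsTightMeasureSet.of_compactSpace
    (A := (fourierSubalgebra (T := 1)).comap
      (BoundedContinuousFunction.toContinuousMapStarₐ ℂ)) ?_ ?_
  · intro x y hxy
    obtain ⟨_, ⟨f, hf, rfl⟩, hne⟩ := fourierSubalgebra_separatesPoints (T := 1) hxy
    exact ⟨f, ⟨f, ⟨BoundedContinuousFunction.mkOfCompact f, hf, rfl⟩, rfl⟩, hne⟩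
  · intro g hg
    have hspan : BoundedContinuousFunction.toContinuousMapStarₐ ℂ g ∈
        Submodule.span ℂ (Set.range (fourier (T := 1))) := by
      rw [← fourierSubalgebra_coe]
      exact hg
    have key : ∀ f ∈ Submodule.span ℂ (Set.range (fourier (T := 1))),
        Tendsto (fun N => ∫ x, f x ∂(empiricalMeasure α N)) atTop
          (𝓝 (∫ x : AddCircle (1 : ℝ), f x)) := by
      have hInt (f : C(AddCircle (1 : ℝ), ℂ)) (μ : Measure (AddCircle (1 : ℝ)))
          [IsFiniteMeasure μ] : Integrable f μ :=
        f.continuous.integrable_of_hasCompactSupport (HasCompactSupport.of_compactSpace f)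
      intro f hf
      induction hf using Submodule.span_induction with
      | mem f hf =>
        obtain ⟨k, rfl⟩ := hf
        exact tendsto_integral_fourier hα k
      | zero => simp
      | add f g _ _ hf hg =>
        simp only [ContinuousMap.add_apply, integral_add (hInt f _) (hInt g _)]
        exact hf.add hg
      | smul c f _ hf =>
        simp only [ContinuousMap.smul_apply, integral_smul]
        exact hf.const_smul c
    exact key _ hspan

/-! ### Arcs of the circle -/

/-- The closed arc `[0, t]` of the circle `ℝ / ℤ`. -/
def arc (t : ℝ) : Set (AddCircle (1 : ℝ)) := (fun x : ℝ => (x : AddCircle (1 : ℝ))) '' Set.Icc 0 t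

lemma isClosed_arc (t : ℝ) : IsClosed (arc t) :=
  (isCompact_Icc.image (AddCircle.continuous_mk' 1)).isClosed

lemma coe_mem_arc {t : ℝ} (ht : t < 1) (x : ℝ) :
    (x : AddCircle (1 : ℝ)) ∈ arc t ↔ Int.fract x ≤ t := by
  constructor
  · rintro ⟨y, hy, hxy⟩
    have h : (y : AddCircle (1 : ℝ)) = (Int.fract x : ℝ) := by
      rw [AddCircle.coe_fract]; exact hxy
    rw [AddCircle.coe_eq_coe_iff_of_mem_Ico (a := 0)
      ⟨hy.1, by linarith [hy.2]⟩ ⟨Int.fract_nonneg x, by linarith [Int.fract_lt_one x]⟩] at h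
    exact h ▸ hy.2
  · intro h
    exact ⟨Int.fract x, ⟨Int.fract_nonneg x, h⟩, AddCircle.coe_fract x⟩

lemma volume_arc {t : ℝ} (ht0 : 0 ≤ t) (ht : t < 1) : volume (arc t) = ENNReal.ofReal t := by
  rw [AddCircle.add_projection_respects_measure 1 0 (isClosed_arc t).measurableSet]
  -- In the fundamental domain `(0, 1]` the class of `0` is represented by `1`.
  have h : (QuotientAddGroup.mk ⁻¹' arc t ∩ Set.Ioc (0 : ℝ) (0 + 1)) = Set.Ioc 0 t ∪ {1} := by
    ext x
    simp only [Set.mem_inter_iff, Set.mem_preimage, Set.mem_Ioc, Set.mem_union,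
      Set.mem_singleton_iff, zero_add]
    rw [show (QuotientAddGroup.mk x ∈ arc t) ↔ Int.fract x ≤ t from coe_mem_arc ht x]
    constructor
    · rintro ⟨h1, h2, h3⟩
      rcases h3.lt_or_eq with h3 | h3
      · rw [Int.fract_eq_self.2 ⟨h2.le, h3⟩] at h1
        exact Or.inl ⟨h2, h1⟩
      · exact Or.inr h3
    · rintro (⟨h1, h2⟩ | rfl)
      · rw [Int.fract_eq_self.2 ⟨h1.le, by linarith⟩]
        exact ⟨h2, h1, by linarith⟩
      · simpa using ht0
  rw [h]
  refine le_antisymm ((measure_union_le _ _).trans (by simp)) ?_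
  calc ENNReal.ofReal t = volume (Set.Ioc 0 t) := by simp
    _ ≤ _ := measure_mono Set.subset_union_left

lemma volume_frontier_arc (t : ℝ) : volume (frontier (arc t)) = 0 := by
  have hsub : frontier (arc t) ⊆ {((0 : ℝ) : AddCircle (1 : ℝ)), (t : AddCircle (1 : ℝ))} := by
    rw [(isClosed_arc t).frontier_eq]
    rintro _ ⟨⟨x, hx, rfl⟩, hInt⟩
    by_contra hne
    simp only [Set.mem_insert_iff, Set.mem_singleton_iff, not_or] at hne
    refine hInt ?_
    -- The quotient map is open, so the image of `(0, t)` is an open subset of the arc.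
    have hopen : IsOpen ((fun x : ℝ => (x : AddCircle (1 : ℝ))) '' Set.Ioo 0 t) :=
      QuotientAddGroup.isOpenMap_coe _ isOpen_Ioo
    refine interior_maximal (Set.image_mono Set.Ioo_subset_Icc_self) hopen ⟨x, ⟨?_, ?_⟩, rfl⟩
    · exact lt_of_le_of_ne hx.1 fun h => hne.1 (by rw [h])
    · exact lt_of_le_of_ne hx.2 fun h => hne.2 (by rw [h])
  have hnull (x : AddCircle (1 : ℝ)) : volume {x} = 0 := by
    rw [← Metric.closedBall_zero, AddCircle.volume_closedBall]
    simp
  exact measure_mono_null hsub (measure_union_null (hnull _) (hnull _))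

/-- Weyl's equidistribution theorem for initial intervals. -/
theorem hasNatDensity_fract_le {α t : ℝ} (hα : Irrational α) (ht0 : 0 ≤ t) (ht : t < 1) :
    HasNatDensity {n | Int.fract ((n + 1 : ℕ) * α) ≤ t} t := by
  have h := ProbabilityMeasure.tendsto_measure_of_null_frontier_of_tendsto'
    (tendsto_empiricalMeasure hα) (E := arc t) (volume_frontier_arc t)
  have h' := (ENNReal.tendsto_toReal (measure_ne_top volume (arc t))).comp h
  simp only [ProbabilityMeasure.coe_mk, volume_arc ht0 ht, ENNReal.toReal_ofReal ht0] at h'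
  rw [HasNatDensity, ← tendsto_add_atTop_iff_nat 1]
  refine h'.congr fun N => ?_
  simp only [Function.comp_apply, empiricalMeasure_apply α N (isClosed_arc t).measurableSet,
    coe_mem_arc ht, Set.mem_ofPred_eq]

/-! ### Powers of two -/

lemma irrational_logb_ten_two : Irrational (Real.logb 10 2) := by
  rintro ⟨q, hq⟩
  have hpos : 0 < Real.logb 10 2 := Real.logb_pos (by norm_num) (by norm_num)
  have hq0 : 0 < q := by rw [← hq] at hpos; exact_mod_cast hpos
  have hden : (q : ℝ) * q.den = (q.num.toNat : ℕ) := by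
    have h1 : ((q.num.toNat : ℕ) : ℤ) = q.num := Int.toNat_of_nonneg (Rat.num_pos.2 hq0).le
    have h2 : (q.num : ℝ) = ((q.num.toNat : ℕ) : ℝ) := by exact_mod_cast h1.symm
    rw [← h2]
    exact_mod_cast Rat.mul_den_eq_num q
  have h2 : (2 : ℝ) ^ q.den = 10 ^ q.num.toNat := by
    rw [← Real.rpow_natCast 10, ← hden, hq, Real.rpow_mul (by norm_num),
      Real.rpow_logb (by norm_num) (by norm_num) (by norm_num), Real.rpow_natCast]
  have h3 : 2 ^ q.den = 10 ^ q.num.toNat := by exact_mod_cast h2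
  have hnum : q.num.toNat ≠ 0 := by
    have := Rat.num_pos.2 hq0
    omega
  have h5 : 5 ∣ 2 ^ q.den := by
    rw [h3]
    exact dvd_pow (by norm_num) hnum
  exact absurd (Nat.prime_five.dvd_of_dvd_pow h5) (by norm_num)

lemma mantissa_eq_rpow_fract {B x : ℝ} (hB : 1 < B) (hx : 0 < x) :
    mantissa B x = B ^ Int.fract (Real.logb B x) := by
  have hB0 : 0 < B := by linarith
  rw [mantissa, Int.fract, Real.rpow_sub hB0, Real.rpow_logb hB0 hB.ne' hx, Real.rpow_intCast]

/-- The sequence `(2^n)_{n ≥ 1}` is Benford base 10. -/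
theorem two_pow_benford (s : ℝ) (hs : s ∈ Set.Ico (1 : ℝ) 10) :
    HasNatDensity {n | mantissa 10 ((2 : ℝ) ^ (n + 1)) ∈ Set.Icc 1 s}
      (Real.logb 10 s) := by
  have h10 : (1 : ℝ) < 10 := by norm_num
  have hs0 : 0 < s := by linarith [hs.1]
  have ht1 : Real.logb 10 s < 1 := by
    rw [Real.logb_lt_iff_lt_rpow h10 hs0, Real.rpow_one]
    exact hs.2
  convert hasNatDensity_fract_le irrational_logb_ten_two (Real.logb_nonneg h10 hs.1) ht1 using 1
  ext n
  rw [Set.mem_ofPred_eq, Set.mem_ofPred_eq, mantissa_eq_rpow_fract h10 (by positivity),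
    Real.logb_pow, Set.mem_Icc, Real.le_logb_iff_rpow_le h10 hs0]
  exact and_iff_right (Real.one_le_rpow h10.le (Int.fract_nonneg _))
end

section
/- If Y_T is a family of real random variables whose cumulative distribution functions satisfy F_T(x) = F(x/T) + E_T(x) for a distribution F with density f satisfying Poisson summation, and Conditions (small tails, rapid decay of f̂, small truncated translated error) hold, then Y_T mod 1 converges to the uniform distribution on [0,1]: for all [a,b] ⊆ [0,1], P(Y_T mod 1 ∈ [a,b]) → b−a as T → ∞. -/
/-! Any absolutely continuous probability law, dilated by `T → ∞`, equidistributes modulo 1: for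
`1`-periodic `g` with `|g| ≤ 1`, averaging `∫ f(x) g(Tx) dx` over the translations `x ↦ x + s/T`,
`s ∈ [0,1]`, replaces `g` by its mean at a cost of at most `sup ‖f(· + s/T) - f‖₁`, which tends
to `0` because translations act continuously on `L¹` (`tendsto_integral_mul_periodic`).

Cutting off to `|⌊Tx⌋| ≤ ⌊T h(T)⌋` loses only a vanishing part of the mass of `f`. So the main
terms of `F_T(b + k) - F_T(a + k)`, summed over `|k| ≤ ⌊T h(T)⌋`, have limit inferior at
least `b - a` (`eventually_lt_sum_main`), and the error terms vanish by hypothesis. Hence the limit inferior of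
`P(Y_T mod 1 ∈ (a,b))` is at least `b - a`. Such lower bounds for the three disjoint sets
`(0,a)`, `(b,1)` and `(a,b) ⊆ [a,b]` force `P(Y_T mod 1 ∈ [a,b]) → b - a`, and in
particular atoms at the endpoints cannot matter in the limit. -/

open MeasureTheory Real Filter

/-- The Fourier transform `f̂(y) = ∫ f(x) e^{-2πixy} dx`. -/
noncomputable def fourierTransform (f : ℝ → ℝ) (y : ℝ) : ℂ :=
  ∫ x : ℝ, (f x : ℂ) * Complex.exp (-(2 * π * x * y) * Complex.I)

/-- Translation is continuous in `L¹`, in terms of functions: this unfolds the continuity of the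
domain action of `ℝ` on `Lp ℝ 1`. -/
lemma eventually_translate_L1 (f : ℝ → ℝ) (hf : Integrable f) {ε : ℝ} (hε : 0 < ε) :
    ∀ᶠ u in nhds (0 : ℝ), ∫ x, |f (x + u) - f x| < ε := by
  have hm : MemLp f 1 volume := memLp_one_iff_integrable.2 hf
  have : Fact ((1 : ENNReal) ≠ ⊤) := ⟨ENNReal.one_ne_top⟩
  have hc : Continuous fun u : ℝ => (DomAddAct.mk u) +ᵥ (hm.toLp f) := by
    have : Continuous fun u : ℝ => (DomAddAct.mk u) := DomAddAct.continuous_mk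
    exact this.vadd continuous_const
  have h0 := (hc.tendsto 0).dist (tendsto_const_nhds (x := (hm.toLp f : Lp ℝ 1 volume)))
  rw [DomAddAct.mk_zero, zero_vadd, dist_self] at h0
  filter_upwards [h0.eventually (gt_mem_nhds hε)] with u hu
  rw [DomAddAct.mk_vadd_toLp, dist_eq_norm, ← MemLp.toLp_sub, Lp.norm_toLp] at hu
  have hi : Integrable (fun x => f (x + u) - f x) := (hf.comp_add_right u).sub hf
  rw [eLpNorm_one_eq_lintegral_enorm] at hu
  have := integral_norm_eq_lintegral_enorm hi.aestronglyMeasurable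
  simp only [Real.norm_eq_abs] at this
  rw [this]
  simpa [add_comm] using hu

/-- Riemann–Lebesgue for bounded periodic functions: a rapidly oscillating periodic factor may be
replaced by its mean. -/
lemma tendsto_integral_mul_periodic (f : ℝ → ℝ) (hf : Integrable f) (g : ℝ → ℝ)
    (hg : Measurable g) (hb : ∀ x, |g x| ≤ 1) (hp : Function.Periodic g 1) :
    Tendsto (fun T : ℝ => ∫ x, f x * g (T * x)) atTop
      (nhds ((∫ x, f x) * ∫ s in (0 : ℝ)..1, g s)) := by
  rw [Metric.tendsto_atTop]
  intro ε hε
  obtain ⟨δ, hδ, hδ'⟩ := Metric.eventually_nhds_iff.1 (eventually_translate_L1 f hf (half_pos hε))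
  refine ⟨max 1 (2 / δ), fun T hT => ?_⟩
  have hT1 : 1 ≤ T := (le_max_left _ _).trans hT
  have hT0 : 0 < T := by linarith
  have hTδ : 1 / T < δ := by
    have : 2 / δ ≤ T := (le_max_right _ _).trans hT
    rw [div_le_iff₀ hδ] at this
    rw [div_lt_iff₀ hT0]
    linarith
  have hgi : ∀ (k : ℝ → ℝ) (s : ℝ), Integrable k → Integrable fun x => k x * g (T * x + s) :=
    fun k s hk => hk.mul_bdd (c := 1)
      (hg.comp ((measurable_const_mul T).add_const s)).aestronglyMeasurable (by filter_upwards with x using hb _)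
  have hprod : Integrable (Function.uncurry fun s x : ℝ => f x * g (T * x + s))
      ((volume.restrict (Set.uIoc (0 : ℝ) 1)).prod volume) := by
    have h1 : Integrable (fun _ : ℝ => (1 : ℝ)) (volume.restrict (Set.uIoc (0 : ℝ) 1)) := by
      rw [Set.uIoc_of_le zero_le_one]; exact integrable_const _
    have h2 := (h1.mul_prod hf).mul_bdd (c := 1)
      (f := fun z : ℝ × ℝ => 1 * f z.2) (g := fun z : ℝ × ℝ => g (T * z.2 + z.1))
      (hg.comp ((measurable_snd.const_mul T).add measurable_fst)).aestronglyMeasurable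
      (by filter_upwards with x using hb _)
    simpa [Function.uncurry_def] using h2
  have hswap := intervalIntegral_integral_swap hprod
  have hmean : ∀ x : ℝ, ∫ s in (0 : ℝ)..1, f x * g (T * x + s) = f x * ∫ s in (0 : ℝ)..1, g s := by
    intro x
    rw [intervalIntegral.integral_const_mul, intervalIntegral.integral_comp_add_left g (T * x)]
    congr 1
    simpa using hp.intervalIntegral_add_eq (T * x + 0) 0
  simp only [hmean] at hswap
  rw [integral_mul_const] at hswap
  have hI : IntervalIntegrable (fun s => ∫ x, f x * g (T * x + s)) volume 0 1 := by
    rw [intervalIntegrable_iff]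
    exact hprod.integral_prod_left
  have hconst : ∫ x, f x * g (T * x) = ∫ s in (0 : ℝ)..1, ∫ x, f x * g (T * x) := by simp
  rw [← hswap, hconst, dist_eq_norm, ← intervalIntegral.integral_sub (by simp) hI]
  refine lt_of_le_of_lt (intervalIntegral.norm_integral_le_of_norm_le_const (C := ε / 2) ?_) ?_
  swap
  · simp; linarith
  intro s hs
  rw [Set.uIoc_of_le zero_le_one] at hs
  have htr : ∫ x, f x * g (T * x) = ∫ x, f (x + s / T) * g (T * x + s) := by
    rw [← integral_add_right_eq_self (fun x => f x * g (T * x)) (s / T)]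
    congr 1; ext x
    congr 2
    field_simp
  rw [htr, ← integral_sub (hgi _ s (hf.comp_add_right _)) (hgi _ s hf)]
  -- The shift `s / T` is below `δ` uniformly in `s ∈ (0, 1]`.
  have hd := hδ' (y := s / T) (by
    rw [dist_zero_right, Real.norm_eq_abs, abs_of_nonneg (div_nonneg hs.1.le hT0.le)]
    exact lt_of_le_of_lt (by gcongr; exact hs.2) hTδ)
  refine (norm_integral_le_integral_norm _).trans (le_trans ?_ hd.le)
  refine integral_mono ((hgi _ s (hf.comp_add_right _)).sub (hgi _ s hf)).norm
    ((hf.comp_add_right _).sub hf).abs fun x => ?_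
  simp only [Real.norm_eq_abs, ← sub_mul, abs_mul]
  exact mul_le_of_le_one_right (abs_nonneg _) (hb _)

lemma mem_Ioc_add_int_iff {a b : ℝ} (ha : 0 ≤ a) (hb : b < 1) (k : ℤ) (y : ℝ) :
    y ∈ Set.Ioc (a + k) (b + k) ↔ ⌊y⌋ = k ∧ Int.fract y ∈ Set.Ioc a b := by
  constructor
  · rintro ⟨h1, h2⟩
    have : ⌊y⌋ = k := Int.floor_eq_iff.2 ⟨by linarith, by linarith⟩
    refine ⟨this, ?_⟩
    rw [Int.fract, this]
    exact ⟨by linarith, by linarith⟩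
  · rintro ⟨rfl, h1, h2⟩
    have := Int.floor_add_fract y
    exact ⟨by linarith, by linarith⟩

/-- Equidistribution modulo 1 of `T X`, for `X` with density `f`. -/
lemma tendsto_integral_fract (f : ℝ → ℝ) (hf : Integrable f) (hprob : ∫ x, f x = 1)
    {a b : ℝ} (ha : 0 ≤ a) (hab : a < b) (hb : b < 1) :
    Tendsto (fun T : ℝ => ∫ x in {x | Int.fract (T * x) ∈ Set.Ioc a b}, f x) atTop
      (nhds (b - a)) := by
  have key := tendsto_integral_mul_periodic f hf
    (fun y => (Set.Ioc a b).indicator (fun _ => (1 : ℝ)) (Int.fract y))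
    ((measurable_const.indicator measurableSet_Ioc).comp measurable_fract)
    (fun x => by by_cases hx : Int.fract x ∈ Set.Ioc a b <;> simp [Set.indicator, hx])
    (fun x => by simp)
  have hm : ∫ s in (0 : ℝ)..1, (Set.Ioc a b).indicator (fun _ => (1 : ℝ)) (Int.fract s)
      = b - a := by
    have : ∫ s in (0 : ℝ)..1, (Set.Ioc a b).indicator (fun _ => (1 : ℝ)) (Int.fract s)
        = ∫ s in (0 : ℝ)..1, (Set.Ioc a b).indicator (fun _ => (1 : ℝ)) s := by
      rw [intervalIntegral.integral_of_le zero_le_one, intervalIntegral.integral_of_le zero_le_one]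
      refine setIntegral_congr_fun measurableSet_Ioc fun s hs => ?_
      rcases hs.2.lt_or_eq with h | rfl
      · simp only [Int.fract_eq_self.2 ⟨hs.1.le, h⟩]
      · simp [Set.indicator, ha.not_gt, hb.not_ge]
    rw [this, intervalIntegral.integral_of_le zero_le_one, setIntegral_indicator measurableSet_Ioc,
      Set.inter_eq_right.2 (Set.Ioc_subset_Ioc ha hb.le)]
    simp [hab.le]
  rw [hprob, hm, one_mul] at key
  refine key.congr fun T => ?_
  rw [← integral_indicator]
  · congr 1; ext x
    by_cases hx : Int.fract (T * x) ∈ Set.Ioc a b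
    · rw [Set.indicator_of_mem hx, Set.indicator_of_mem (by exact hx), mul_one]
    · rw [Set.indicator_of_notMem hx, Set.indicator_of_notMem (by exact hx), mul_zero]
  · exact (measurable_fract.comp (measurable_const_mul T)) measurableSet_Ioc

/-- Almost all the mass of `f` lies where `|⌊Tx⌋|` is at most `⌊T h(T)⌋`. -/
lemma tendsto_integral_cutoff (f : ℝ → ℝ) (hf : Integrable f)
    (h : ℝ → ℝ) (hinf : Tendsto h atTop atTop) :
    Tendsto (fun T : ℝ => ∫ x in {x | ⌊T * x⌋ ∈ Finset.Icc (-⌊T * h T⌋) ⌊T * h T⌋}ᶜ, f x)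
      atTop (nhds 0) := by
  have hms : ∀ T : ℝ, MeasurableSet {x : ℝ | ⌊T * x⌋ ∈ Finset.Icc (-⌊T * h T⌋) ⌊T * h T⌋}ᶜ :=
    fun T => ((Int.measurable_floor.comp (measurable_const_mul T))
      (Finset.measurableSet (Finset.Icc (-⌊T * h T⌋) ⌊T * h T⌋))).compl
  simp_rw [← integral_indicator (hms _)]
  rw [show (0 : ℝ) = ∫ x : ℝ, (0 : ℝ) by simp]
  refine tendsto_integral_filter_of_dominated_convergence (fun x => ‖f x‖) ?_ ?_ hf.norm ?_
  · filter_upwards with T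
    exact hf.aestronglyMeasurable.indicator (hms T)
  · filter_upwards with T
    filter_upwards with x using norm_indicator_le_norm_self _ _
  · filter_upwards with x
    refine tendsto_const_nhds.congr' ?_
    filter_upwards [hinf.eventually_ge_atTop (|x| + 1), eventually_ge_atTop 1] with T hT hT1
    rw [Set.indicator_of_notMem]
    simp only [Set.mem_compl_iff, not_not, Set.mem_ofPred_eq, Finset.mem_Icc]
    have h1 : T * (|x| + 1) ≤ T * h T := by gcongr
    constructor
    · rw [Int.le_floor]
      push_cast
      have := Int.lt_floor_add_one (T * h T)
      nlinarith [neg_abs_le x]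
    · apply Int.floor_le_floor
      nlinarith [le_abs_self x]

/-- The main terms of the truncated sum of CDF increments have limit inferior at least `b - a`. -/
lemma eventually_lt_sum_main (f : ℝ → ℝ) (hf : Integrable f) (hpos : ∀ x, 0 ≤ f x)
    (hprob : ∫ x, f x = 1) (h : ℝ → ℝ) (hinf : Tendsto h atTop atTop)
    {a b : ℝ} (ha : 0 ≤ a) (hab : a < b) (hb : b < 1) {ε : ℝ} (hε : 0 < ε) :
    ∀ᶠ T : ℝ in atTop, b - a - ε < ∑ k ∈ Finset.Icc (-⌊T * h T⌋) ⌊T * h T⌋,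
      ((∫ t in Set.Iic ((b + k) / T), f t) - ∫ t in Set.Iic ((a + k) / T), f t) := by
  have hlim := (tendsto_integral_fract f hf hprob ha hab hb).sub
    (tendsto_integral_cutoff f hf h hinf)
  rw [sub_zero] at hlim
  filter_upwards [hlim.eventually (lt_mem_nhds (show b - a - ε < b - a by linarith)),
    eventually_gt_atTop 0] with T hT hT0
  refine hT.trans_le ?_
  have hmem : ∀ (k : ℤ) (x : ℝ), x ∈ Set.Ioc ((a + k) / T) ((b + k) / T) ↔
      ⌊T * x⌋ = k ∧ Int.fract (T * x) ∈ Set.Ioc a b := by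
    intro k x
    rw [← mem_Ioc_add_int_iff ha hb, Set.mem_Ioc, Set.mem_Ioc, div_lt_iff₀ hT0, le_div_iff₀ hT0,
      mul_comm]
  have hk : ∀ k : ℤ, (∫ t in Set.Iic ((b + k) / T), f t) - ∫ t in Set.Iic ((a + k) / T), f t
      = ∫ t in Set.Ioc ((a + k) / T) ((b + k) / T), f t := by
    intro k
    rw [intervalIntegral.integral_Iic_sub_Iic hf.integrableOn hf.integrableOn,
      intervalIntegral.integral_of_le (by gcongr)]
  simp_rw [hk]
  rw [← integral_biUnion_finset _ (fun _ _ => measurableSet_Ioc) _ (fun _ _ => hf.integrableOn)]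
  swap
  · intro i _ j _ hij
    refine Set.disjoint_left.2 fun x hi hj => hij ?_
    rw [← ((hmem i x).1 hi).1, ((hmem j x).1 hj).1]
  rw [sub_le_iff_le_add]
  set D := {x | ⌊T * x⌋ ∈ Finset.Icc (-⌊T * h T⌋) ⌊T * h T⌋}
  have hU : MeasurableSet (⋃ k ∈ Finset.Icc (-⌊T * h T⌋) ⌊T * h T⌋,
      Set.Ioc ((a + (k : ℝ)) / T) ((b + k) / T)) :=
    Finset.measurableSet_biUnion _ fun _ _ => measurableSet_Ioc
  rw [← setIntegral_union (s := ⋃ k ∈ Finset.Icc (-⌊T * h T⌋) ⌊T * h T⌋,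
      Set.Ioc ((a + (k : ℝ)) / T) ((b + k) / T)) (t := Dᶜ) _ _ hf.integrableOn hf.integrableOn]
  · refine setIntegral_mono_set hf.integrableOn (by filter_upwards with x using hpos x)
      (LE.le.eventuallyLE fun x hx => ?_)
    by_cases hD : x ∈ D
    · left
      exact Set.mem_biUnion (x := ⌊T * x⌋) hD ((hmem _ x).2 ⟨rfl, hx⟩)
    · exact Or.inr hD
  · refine Set.disjoint_left.2 fun x hx hxD => hxD ?_
    simp only [Set.mem_iUnion] at hx
    obtain ⟨k, hk, hx⟩ := hx
    rw [hmem] at hx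
    show ⌊T * x⌋ ∈ Finset.Icc (-⌊T * h T⌋) ⌊T * h T⌋
    rwa [hx.1]
  · exact ((Int.measurable_floor.comp (measurable_const_mul T))
      (Finset.measurableSet (Finset.Icc (-⌊T * h T⌋) ⌊T * h T⌋))).compl

/-- The intervals `(a + k, b + k]` are disjoint parts of the event `fract ∈ (a, b]`. -/
lemma sum_cdf_le (μ : Measure ℝ) [IsProbabilityMeasure μ] {a b : ℝ} (ha : 0 ≤ a) (hab : a < b)
    (hb : b < 1) (s : Finset ℤ) :
    ∑ k ∈ s, (μ.real (Set.Iic (b + k)) - μ.real (Set.Iic (a + k)))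
      ≤ μ.real {x | Int.fract x ∈ Set.Ioc a b} := by
  have hk : ∀ k : ℤ, μ.real (Set.Iic (b + k)) - μ.real (Set.Iic (a + k))
      = μ.real (Set.Ioc (a + k) (b + k)) := by
    intro k
    rw [← Set.Iic_union_Ioc_eq_Iic (show a + (k : ℝ) ≤ b + k by linarith),
      measureReal_union (Set.Iic_disjoint_Ioc le_rfl) measurableSet_Ioc, add_sub_cancel_left]
  simp_rw [hk]
  rw [← measureReal_biUnion_finset _ fun _ _ => measurableSet_Ioc]
  · refine measureReal_mono (Set.iUnion₂_subset fun k _ x hx => ?_)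
    exact ((mem_Ioc_add_int_iff ha hb k x).1 hx).2
  · intro i _ j _ hij
    refine Set.disjoint_left.2 fun x hi hj => hij ?_
    rw [← ((mem_Ioc_add_int_iff ha hb i x).1 hi).1, ((mem_Ioc_add_int_iff ha hb j x).1 hj).1]

/-- A Benford-good family of log-processes (represented by the laws `μ T` of the
random variables `Y_T`) becomes equidistributed modulo 1: under
(0) the CDF structure `F_T(x) = F(x/T) + E_T(x)` with `F` the CDF of a density `f`
    satisfying Poisson summation,
(1) small tails, (2) rapid decay of `f̂`, and (3) small truncated translated error,
we have `P(Y_T mod 1 ∈ [a,b]) → b - a` as `T → ∞` for all `[a,b] ⊆ [0,1]`. -/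
theorem benford_good_equidistributed
    (μ : ℝ → Measure ℝ) (hμ : ∀ T, IsProbabilityMeasure (μ T))
    (f : ℝ → ℝ) (hint : Integrable f) (hpos : ∀ x, 0 ≤ f x) (hprob : ∫ x, f x = 1)
    (hPoisson : ∀ T : ℝ, 0 < T → ∀ x : ℝ,
      ∑' k : ℤ, ((f ((x + k) / T) : ℂ)) =
        T * ∑' k : ℤ, fourierTransform f (T * k) * Complex.exp (2 * π * Complex.I * x * k))
    (E : ℝ → ℝ → ℝ)
    (hCDF : ∀ T : ℝ, 0 < T → ∀ x : ℝ,
      ((μ T) (Set.Iic x)).toReal = (∫ t in Set.Iic (x / T), f t) + E T x)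
    (h : ℝ → ℝ) (hmono : Monotone h) (hinf : Filter.Tendsto h Filter.atTop Filter.atTop)
    -- Condition 1: small tails
    (htail₁ : Filter.Tendsto (fun T : ℝ => 1 - ((μ T) (Set.Iic (T * h T))).toReal)
      Filter.atTop (nhds 0))
    (htail₂ : Filter.Tendsto (fun T : ℝ => ((μ T) (Set.Iic (-(T * h T)))).toReal)
      Filter.atTop (nhds 0))
    -- Condition 2: rapid decay of the characteristic function
    (hdecay : Filter.Tendsto
      (fun T : ℝ => ∑' k : {k : ℤ // k ≠ 0}, ‖fourierTransform f (T * (k : ℤ)) / ((k : ℤ) : ℂ)‖)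
      Filter.atTop (nhds 0))
    -- Condition 3: small truncated translated error
    (herr : ∀ a b : ℝ, 0 ≤ a → a < b → b ≤ 1 →
      Filter.Tendsto
        (fun T : ℝ => ∑ k ∈ Finset.Icc (-⌊T * h T⌋) ⌊T * h T⌋, (E T (b + k) - E T (a + k)))
        Filter.atTop (nhds 0)) :
    ∀ a b : ℝ, 0 ≤ a → a ≤ b → b ≤ 1 →
      Filter.Tendsto (fun T : ℝ => ((μ T) {x : ℝ | Int.fract x ∈ Set.Icc a b}).toReal)
        Filter.atTop (nhds (b - a)) := by
  have lower : ∀ a b : ℝ, 0 ≤ a → a ≤ b → b ≤ 1 → ∀ ε > 0, ∀ᶠ T : ℝ in atTop,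
      b - a - ε < (μ T).real {x | Int.fract x ∈ Set.Ioo a b} := by
    intro a b ha hab hb ε hε
    rcases le_or_gt (b - ε / 2) a with hab' | hab'
    · filter_upwards with T
      exact lt_of_lt_of_le (by linarith) measureReal_nonneg
    -- Shrinking `b` makes the upper endpoint `< 1` and `(a, b - ε/2]` a subset of `(a, b)`.
    have hb1 : b - ε / 2 < 1 := by linarith
    filter_upwards [eventually_lt_sum_main f hint hpos hprob h hinf ha hab' hb1
        (show 0 < ε / 4 by linarith),
      (herr a (b - ε / 2) ha hab' hb1.le).eventually
        (lt_mem_nhds (show -(ε / 4) < 0 by linarith)),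
      eventually_gt_atTop 0] with T h1 h2 hT0
    have := hμ T
    have h3 := sum_cdf_le (μ T) ha hab' hb1 (Finset.Icc (-⌊T * h T⌋) ⌊T * h T⌋)
    have h4 : (μ T).real {x | Int.fract x ∈ Set.Ioc a (b - ε / 2)}
        ≤ (μ T).real {x | Int.fract x ∈ Set.Ioo a b} :=
      measureReal_mono fun x hx => ⟨hx.1, hx.2.trans_lt (by linarith)⟩
    have h5 : ∑ k ∈ Finset.Icc (-⌊T * h T⌋) ⌊T * h T⌋,
        ((μ T).real (Set.Iic (b - ε / 2 + k)) - (μ T).real (Set.Iic (a + k)))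
        = ∑ k ∈ Finset.Icc (-⌊T * h T⌋) ⌊T * h T⌋,
          ((∫ t in Set.Iic ((b - ε / 2 + k) / T), f t) - ∫ t in Set.Iic ((a + k) / T), f t)
        + ∑ k ∈ Finset.Icc (-⌊T * h T⌋) ⌊T * h T⌋, (E T (b - ε / 2 + k) - E T (a + k)) := by
      rw [← Finset.sum_add_distrib]
      refine Finset.sum_congr rfl fun k _ => ?_
      rw [measureReal_def, measureReal_def, hCDF T hT0, hCDF T hT0]
      ring
    linarith
  intro a b ha hab hb
  rw [Metric.tendsto_nhds]
  intro ε hε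
  filter_upwards [lower a b ha hab hb (ε / 2) (by linarith),
    lower 0 a le_rfl ha (hab.trans hb) (ε / 2) (by linarith),
    lower b 1 (ha.trans hab) hb le_rfl (ε / 2) (by linarith)] with T h1 h2 h3
  have := hμ T
  have hmeas : ∀ s : Set ℝ, MeasurableSet s → MeasurableSet {x : ℝ | Int.fract x ∈ s} :=
    fun s hs => measurable_fract hs
  -- The upper bound for `[a, b]` comes from the lower bounds for `(0, a)` and `(b, 1)`.
  have h4 : (μ T).real {x | Int.fract x ∈ Set.Ioo a b}
      ≤ (μ T).real {x | Int.fract x ∈ Set.Icc a b} :=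
    measureReal_mono fun x hx => ⟨hx.1.le, hx.2.le⟩
  have h5 : (μ T).real ({x | Int.fract x ∈ Set.Icc a b} ∪ {x | Int.fract x ∈ Set.Ioo 0 a})
      = _ := measureReal_union
    (Set.disjoint_left.2 fun x hx hy => absurd hx.1 (not_le.2 hy.2)) (hmeas _ measurableSet_Ioo)
  have h6 : (μ T).real (({x | Int.fract x ∈ Set.Icc a b} ∪ {x | Int.fract x ∈ Set.Ioo 0 a})
      ∪ {x | Int.fract x ∈ Set.Ioo b 1}) = _ := measureReal_union
    (Set.disjoint_left.2 fun x hx hy => by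
      rcases hx with hx | hx
      · exact absurd hx.2 (not_le.2 hy.1)
      · exact absurd (hx.2.trans_le hab) (not_lt.2 hy.1.le)) (hmeas _ measurableSet_Ioo)
  have h7 : (μ T).real (({x | Int.fract x ∈ Set.Icc a b} ∪ {x | Int.fract x ∈ Set.Ioo 0 a})
      ∪ {x | Int.fract x ∈ Set.Ioo b 1}) ≤ 1 := measureReal_le_one
  rw [← measureReal_def, Real.dist_eq, abs_lt]
  constructor <;> linarith
end

section
/- (Erdős–Turán inequality) There exists an absolute constant C such that for any real sequence x_1,…,x_N and any positive integer m, the discrepancy D_N = sup_{[a,b]⊆[0,1]} |(b−a) − (1/N)#{n ≤ N : x_n mod 1 ∈ [a,b]}| satisfies D_N ≤ C(1/m + ∑_{h=1}^m (1/h)|(1/N)∑_{n=1}^N e^{2πi h x_n}|). -/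
/-!
The proof majorises the indicator of an arc of `ℝ / ℤ` by a trigonometric polynomial of degree at
most `m` and averages the majorant over the points `x_1, …, x_N`.

Let `P n t = ∑_{k < n} e(kt)` be the Dirichlet sum, and take `n ≈ m / 2` and `M = 8n`. The Jackson
kernel `|P n|⁴` is a nonnegative trigonometric polynomial of degree `2(n - 1) ≤ m` with coefficients
`r h ∈ [0, n³]` (`kernel_expansion`), it decays like the fourth power of the distance to `ℤ`
(`norm_P_pow_le`), and its translates by the `M`-th roots of unity sum to the constant `M r(0)`,
because `M` exceeds the degree (`sum_kernel`). For an arc covered by the lattice points `(A + i) / M`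
with `0 ≤ i < L`, the translates at those lattice points, taken with weights
`wt L i = 1 + O(1 / (distance to the ends in lattice steps)²)`, add up to at least `M r(0)` on the
arc (`majorant`): the missing translates contribute a tail of cubic, hence also of quadratic, decay
in the distance to the ends, and the surplus weight at the lattice point nearest to the argument
pays for it.

The Fourier coefficient of this majorant at `h` is `r h * W L M A h`. The weights exceed `1` by a
bounded total amount, so `W` at `0` is `L + O(1)`, and for `0 < |h| ≤ M / 4` a geometric sum gives
`|W| = O(M / |h|)`. Averaging over the points bounds the proportion of them in an arc of
length `ℓ` by `ℓ + C (1/m + ∑ (1/h) |S_h| / N)` (`count_le`). Applied to `[a, b]` this is one half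
of the inequality; the other half is the same bound for the complementary arc `[b, a + 1]`.
-/

open scoped Classical
open Real

/-! ### Additive characters and Dirichlet sums -/

/-- The additive character `e(t) = exp(2πit)` of `ℝ / ℤ`. -/
noncomputable def e (t : ℝ) : ℂ := Complex.exp (((2 * π * t : ℝ) : ℂ) * Complex.I)

lemma e_add (s t : ℝ) : e (s + t) = e s * e t := by
  unfold e; rw [← Complex.exp_add]; congr 1; push_cast; ring

lemma e_zero : e 0 = 1 := by simp [e]

lemma norm_e (t : ℝ) : ‖e t‖ = 1 := Complex.norm_exp_ofReal_mul_I _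

lemma conj_e (t : ℝ) : (starRingEnd ℂ) (e t) = e (-t) := by
  unfold e; rw [← Complex.exp_conj, map_mul, Complex.conj_ofReal, Complex.conj_I]; congr 1; push_cast; ring

lemma e_int (k : ℤ) : e k = 1 := by
  unfold e
  rw [← Complex.exp_int_mul_two_pi_mul_I k]; congr 1; push_cast; ring

lemma e_nat_mul (k : ℕ) (t : ℝ) : e (k * t) = e t ^ k := by
  unfold e; rw [← Complex.exp_nat_mul]; congr 1; push_cast; ring

lemma norm_e_sub_one {t : ℝ} (h0 : 0 ≤ t) (h1 : t ≤ 1) : ‖e t - 1‖ = 2 * Real.sin (π * t) := by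
  unfold e
  rw [mul_comm, Complex.norm_exp_I_mul_ofReal_sub_one, Real.norm_eq_abs, abs_of_nonneg]
  · congr 2; ring
  · have : 0 ≤ Real.sin (2 * π * t / 2) :=
      Real.sin_nonneg_of_nonneg_of_le_pi (by positivity) (by nlinarith [Real.pi_pos])
    linarith

/-- The one-sided Dirichlet sum `∑_{0 ≤ k < n} e(kt)`. -/
noncomputable def P (n : ℕ) (t : ℝ) : ℂ := ∑ k ∈ Finset.range n, e (k * t)

lemma P_mul (n : ℕ) (t : ℝ) : P n t * (e t - 1) = e (n * t) - 1 := by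
  unfold P
  simp_rw [e_nat_mul]
  exact geom_sum_mul _ _

lemma norm_P_neg (n : ℕ) (t : ℝ) : ‖P n (-t)‖ = ‖P n t‖ := by
  rw [← Complex.norm_conj (P n t)]
  unfold P
  rw [map_sum]
  simp_rw [conj_e, mul_neg]

lemma P_add_int (n : ℕ) (t : ℝ) (k : ℤ) : P n (t + k) = P n t := by
  unfold P
  refine Finset.sum_congr rfl fun j _ => ?_
  have := e_int (j * k)
  push_cast at this
  rw [mul_add, e_add, this, mul_one]

lemma two_mul_le_sin {t : ℝ} (h0 : 0 ≤ t) (h1 : t ≤ 1 / 2) : 2 * t ≤ Real.sin (π * t) := by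
  have := Real.mul_le_sin (x := π * t) (by positivity) (by nlinarith [Real.pi_pos])
  have h : 2 / π * (π * t) = 2 * t := by field_simp
  linarith

lemma norm_P_mul_le (n : ℕ) {t : ℝ} (h0 : 0 < t) (h1 : t ≤ 1 / 2) : ‖P n t‖ * (2 * t) ≤ 1 := by
  have h := congrArg norm (P_mul n t)
  rw [norm_mul, norm_e_sub_one h0.le (by linarith)] at h
  have h2 : ‖e (n * t) - 1‖ ≤ 2 := by
    refine (norm_sub_le _ _).trans ?_
    rw [norm_e, norm_one]; norm_num
  nlinarith [norm_nonneg (P n t), two_mul_le_sin h0.le h1]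

/-- Quartic decay of the Jackson kernel away from `ℤ`: the two terms stand for the distances of `t`
to `0` and to `1`, whose minimum is what matters. -/
lemma norm_P_pow_le (n : ℕ) {t : ℝ} (h0 : 0 < t) (h1 : t < 1) :
    ‖P n t‖ ^ 4 ≤ 1 / (16 * t ^ 4) + 1 / (16 * (1 - t) ^ 4) := by
  have key : ∀ s : ℝ, 0 < s → s ≤ 1 / 2 → ‖P n s‖ ^ 4 ≤ 1 / (16 * s ^ 4) := by
    intro s hs hs'
    rw [le_div_iff₀ (by positivity)]
    calc ‖P n s‖ ^ 4 * (16 * s ^ 4) = (‖P n s‖ * (2 * s)) ^ 4 := by ring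
      _ ≤ 1 := pow_le_one₀ (by positivity) (norm_P_mul_le n hs hs')
  have p1 : 0 < 1 / (16 * t ^ 4) := by positivity
  have p2 : 0 < 1 / (16 * (1 - t) ^ 4) := by
    have : 0 < 1 - t := by linarith
    positivity
  rcases le_total t (1 / 2) with h | h
  · linarith [key t h0 h]
  · have h3 := key (1 - t) (by linarith) (by linarith)
    have h4 : ‖P n (1 - t)‖ = ‖P n t‖ := by
      have := P_add_int n (-t) 1
      rw [← norm_P_neg n t, ← this]; push_cast; ring_nf
    rw [h4] at h3
    linarith

/-- Within `1 / (8n)` to the right of `0` all the terms of `P n t` have real part at least `1/2`, so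
there is no cancellation. -/
lemma le_norm_P (n : ℕ) {t : ℝ} (h0 : 0 ≤ t) (h1 : 8 * n * t ≤ 1) : (n : ℝ) / 2 ≤ ‖P n t‖ := by
  refine le_trans ?_ (Complex.re_le_norm _)
  unfold P
  rw [Complex.re_sum]
  have : ∀ k ∈ Finset.range n, (1 / 2 : ℝ) ≤ (e (k * t)).re := by
    intro k hk
    have hk' : (k : ℝ) ≤ n := by exact_mod_cast (Finset.mem_range.1 hk).le
    unfold e
    rw [Complex.exp_ofReal_mul_I_re]
    have h2 : 8 * (k * t) ≤ 1 := by nlinarith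
    have h3 : 0 ≤ k * t := by positivity
    have h4 := Real.one_sub_sq_div_two_le_cos (x := 2 * π * (k * t))
    have h5 : 2 * π * (k * t) ≤ 1 := by nlinarith [Real.pi_lt_four, Real.pi_pos]
    have h6 : 0 ≤ 2 * π * (k * t) := by positivity
    nlinarith
  have h := Finset.card_nsmul_le_sum _ _ _ this
  simp only [Finset.card_range, nsmul_eq_mul] at h
  linarith

/-! ### The Jackson kernel -/

/-- The Fourier expansion of `|P n|⁴`. The coefficient `r h` counts the quadruples in `[0, n)⁴` with
`a + b - c - d = h`, and such a quadruple is determined by its first three entries. -/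
lemma kernel_expansion (n m : ℕ) (hn : 0 < n) (hm : 2 * (n - 1) ≤ m) :
    ∃ r : ℤ → ℝ, (∀ h, 0 ≤ r h ∧ r h ≤ (n : ℝ) ^ 3) ∧
      ∀ t : ℝ, ((‖P n t‖ ^ 4 : ℝ) : ℂ) =
        ∑ h ∈ Finset.Icc (-(m : ℤ)) m, (r h : ℂ) * e (h * t) := by
  set R := Finset.range n
  set Q := (R ×ˢ R) ×ˢ (R ×ˢ R) with hQ
  set φ : (ℕ × ℕ) × (ℕ × ℕ) → ℤ := fun q => q.1.1 + q.1.2 - q.2.1 - q.2.2 with hφ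
  refine ⟨fun h => ((Q.filter fun q => φ q = h).card : ℝ), fun h => ⟨by positivity, ?_⟩, ?_⟩
  · have : (Q.filter fun q => φ q = h).card ≤ (R ×ˢ R ×ˢ R).card := by
      refine Finset.card_le_card_of_injOn (fun q => (q.1.1, q.1.2, q.2.1)) ?_ ?_
      · intro q hq
        simp [hQ] at hq ⊢
        tauto
      · rintro ⟨⟨a, b⟩, c, d⟩ hq ⟨⟨a', b'⟩, c', d'⟩ hq' heq
        simp [hQ, hφ] at hq hq' heq ⊢
        obtain ⟨rfl, rfl, rfl⟩ := heq
        omega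
    simp only [Finset.card_product, R, Finset.card_range] at this
    calc ((Q.filter fun q => φ q = h).card : ℝ) ≤ ((n * (n * n) : ℕ) : ℝ) := by exact_mod_cast this
      _ = _ := by push_cast; ring
  · intro t
    have h1 : ((‖P n t‖ ^ 4 : ℝ) : ℂ) = ∑ q ∈ Q, e (φ q * t) := by
      have : ((‖P n t‖ ^ 4 : ℝ) : ℂ) =
          (P n t * P n t) * ((starRingEnd ℂ) (P n t) * (starRingEnd ℂ) (P n t)) := by
        have := Complex.mul_conj' (P n t)
        push_cast
        linear_combination (-(P n t * (starRingEnd ℂ) (P n t)) - (‖P n t‖ : ℂ) ^ 2) * this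
      rw [this, hQ, Finset.sum_product]
      simp_rw [Finset.sum_product]
      unfold P
      rw [map_sum, Finset.sum_mul_sum, Finset.sum_mul_sum]
      simp_rw [Finset.sum_mul, Finset.mul_sum, conj_e]
      refine Finset.sum_congr rfl fun a _ => Finset.sum_congr rfl fun b _ =>
        Finset.sum_congr rfl fun c _ => Finset.sum_congr rfl fun d _ => ?_
      rw [← e_add, ← e_add, ← e_add]; congr 1; simp only [hφ]; push_cast; ring
    rw [h1, ← Finset.sum_fiberwise_of_maps_to (s := Q) (t := Finset.Icc (-(m : ℤ)) m) (g := φ)]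
    · refine Finset.sum_congr rfl fun h _ => ?_
      rw [Finset.sum_congr rfl (g := fun _ => e (h * t)), Finset.sum_const, nsmul_eq_mul]
      · push_cast; rfl
      · intro q hq
        rw [(Finset.mem_filter.1 hq).2]
    · rintro ⟨⟨a, b⟩, c, d⟩ hq
      simp [hQ, R, hφ] at hq ⊢
      omega

/-- Orthogonality of the characters of `ℤ / M`. -/
lemma sum_e_div (M : ℕ) (hM : 0 < M) (h : ℤ) (hh : h ≠ 0) (hlt : |h| < M) :
    ∑ i ∈ Finset.range M, e (h * (-(i : ℝ) / M)) = 0 := by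
  have hM' : (M : ℝ) ≠ 0 := by positivity
  have h1 := P_mul M (-(h : ℝ) / M)
  have h2 : e (M * (-(h : ℝ) / M)) = 1 := by
    rw [← e_int (-h)]; congr 1; push_cast; field_simp
  have h3 : P M (-(h : ℝ) / M) = ∑ i ∈ Finset.range M, e (h * (-(i : ℝ) / M)) := by
    unfold P
    refine Finset.sum_congr rfl fun i _ => ?_
    congr 1; ring
  rw [h2, sub_self, h3] at h1
  refine (mul_eq_zero.1 h1).resolve_right fun h4 => ?_
  unfold e at h4
  rw [sub_eq_zero, Complex.exp_eq_one_iff] at h4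
  obtain ⟨k, hk⟩ := h4
  have h5 : (-(h : ℝ) / M) = k := by
    have : (((-(h : ℝ) / M) : ℝ) : ℂ) * (2 * π * Complex.I) = k * (2 * π * Complex.I) := by
      rw [← hk]; push_cast; ring
    exact_mod_cast mul_right_cancel₀ Complex.two_pi_I_ne_zero this
  rw [div_eq_iff hM'] at h5
  have h6 : -h = k * M := by exact_mod_cast h5
  have h7 : (M : ℤ) ∣ h := by
    rw [← dvd_neg]; exact ⟨k, by rw [h6]; ring⟩
  exact hh (Int.eq_zero_of_abs_lt_dvd h7 hlt)

/-- The translates of the kernel by the multiples of `1 / M` add up to a constant when `M` exceeds its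
degree, since only the zeroth coefficient survives. The argument is written as `u / M`, that is,
measured in lattice steps. -/
lemma sum_kernel (n m M : ℕ) (hmM : m < M) (r : ℤ → ℝ)
    (hr : ∀ t : ℝ, ((‖P n t‖ ^ 4 : ℝ) : ℂ) =
        ∑ h ∈ Finset.Icc (-(m : ℤ)) m, (r h : ℂ) * e (h * t)) (u : ℝ) :
    ∑ i ∈ Finset.range M, ‖P n ((u - i) / M)‖ ^ 4 = M * r 0 := by
  have : ((∑ i ∈ Finset.range M, ‖P n ((u - i) / M)‖ ^ 4 : ℝ) : ℂ) = ((M * r 0 : ℝ) : ℂ) := by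
    rw [Complex.ofReal_sum]
    simp_rw [hr]
    rw [Finset.sum_comm, Finset.sum_eq_single 0]
    · simp [e_zero]
    · intro h hh h0
      have hz := sum_e_div M (by omega) h h0 (by
        rw [Finset.mem_Icc] at hh; rw [abs_lt]; omega)
      calc ∑ i ∈ Finset.range M, (r h : ℂ) * e (h * ((u - i) / M))
          = (r h * e (h * (u / M))) * ∑ i ∈ Finset.range M, e (h * (-(i : ℝ) / M)) := by
            rw [Finset.mul_sum]
            refine Finset.sum_congr rfl fun i _ => ?_
            rw [mul_assoc, ← e_add]; congr 2; ring
        _ = 0 := by rw [hz, mul_zero]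
    · intro h; simp at h
  exact_mod_cast this

/-! ### The weighted majorant of an arc -/

lemma sum_inv_sq_le (k : ℕ) : ∑ i ∈ Finset.range k, 1 / ((i : ℝ) + 1) ^ 2 ≤ 2 := by
  have : ∑ i ∈ Finset.range k, 1 / ((i : ℝ) + 1) ^ 2 ≤ 2 - 2 / ((k : ℝ) + 1) := by
    induction k with
    | zero => simp
    | succ k ih =>
      rw [Finset.sum_range_succ]
      have h : 1 / ((k : ℝ) + 1) ^ 2 ≤ 2 / ((k : ℝ) + 1) - 2 / ((k : ℝ) + 1 + 1) := by
        rw [div_sub_div _ _ (by positivity) (by positivity),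
          div_le_div_iff₀ (by positivity) (by positivity)]
        nlinarith [(Nat.cast_nonneg k : (0 : ℝ) ≤ k)]
      push_cast
      linarith
  have h2 : 0 ≤ 2 / ((k : ℝ) + 1) := by positivity
  linarith

/-- The weight of the `i`-th of the `L` lattice points covering an arc. The terms beyond `1` decay with
the distance to the two ends, and `32768 = 8⁵` is large enough for them to outweigh the kernel mass
lost outside the arc. Only `i < L` is meant, so that the denominators are nonzero. -/
noncomputable def wt (L i : ℕ) : ℝ :=
  1 + 32768 * (1 / ((i : ℝ) + 1) ^ 2 + 1 / ((L : ℝ) - i) ^ 2)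

lemma sum_inv_sq_le' (L : ℕ) : ∑ i ∈ Finset.range L, 1 / ((L : ℝ) - i) ^ 2 ≤ 2 := by
  refine le_trans (le_of_eq ?_) (sum_inv_sq_le L)
  rw [← Finset.sum_range_reflect]
  refine Finset.sum_congr rfl fun i hi => ?_
  have := Finset.mem_range.1 hi
  rw [Nat.sub_sub, Nat.cast_sub (by omega)]
  push_cast; congr 2; ring

/-- On an arc, with coordinate `u ∈ [0, L - 1]` in lattice steps, the weighted sum of the `L` translates
centred in the arc dominates the unweighted sum of all `8n` translates, a constant by
`sum_kernel`. -/
lemma majorant (n L : ℕ) (hn : 0 < n) (hL : L ≤ 8 * n) (u : ℝ) (hu : 0 ≤ u) (huL : u + 1 ≤ L) :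
    ∑ i ∈ Finset.range (8 * n), ‖P n ((u - i) / (8 * n : ℕ))‖ ^ 4 ≤
      ∑ i ∈ Finset.range L, wt L i * ‖P n ((u - i) / (8 * n : ℕ))‖ ^ 4 := by
  have hn' : (0 : ℝ) < n := by exact_mod_cast hn
  set M := 8 * n with hMdef
  have hM' : (M : ℝ) = 8 * n := by rw [hMdef]; push_cast; ring
  have hM0 : (0 : ℝ) < M := by rw [hM']; positivity
  rw [← Finset.sum_range_add_sum_Ico _ hL]
  set B : ℝ := 1 / (u + 1) ^ 2 + 1 / (L - u) ^ 2 with hB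
  have hLu : 0 < (L : ℝ) - u := by linarith
  have bad : ∑ i ∈ Finset.Ico L M, ‖P n ((u - i) / M)‖ ^ 4 ≤ (M : ℝ) ^ 4 / 8 * B := by
    have h1 : ∀ i ∈ Finset.Ico L M, ‖P n ((u - i) / M)‖ ^ 4 ≤
        (M : ℝ) ^ 4 / 16 * (1 / (L - u) ^ 2 * (1 / ((i : ℝ) - L + 1) ^ 2) +
          1 / (u + 1) ^ 2 * (1 / ((M : ℝ) - i) ^ 2)) := by
      intro i hi
      rw [Finset.mem_Ico] at hi
      have hi1 : (L : ℝ) ≤ i := by exact_mod_cast hi.1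
      have hi2 : (i : ℝ) + 1 ≤ M := by exact_mod_cast hi.2
      -- Here `i - u` is at least both `L - u` and `i - L + 1`, and `M + u - i` is at least both
      -- `u + 1` and `M - i`, so each fourth power splits into two squares, one of them summable.
      have e1 : (u - i) / (M : ℝ) = -((i - u) / M) := by ring
      rw [e1, norm_P_neg]
      refine (norm_P_pow_le n (t := (i - u) / M) (div_pos (by linarith) hM0)
        (by rw [div_lt_one hM0]; linarith)).trans ?_
      have e2 : 1 / (16 * ((i - u) / (M : ℝ)) ^ 4) = (M : ℝ) ^ 4 / 16 * (1 / (i - u) ^ 4) := by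
        have : (i : ℝ) - u ≠ 0 := by linarith
        field_simp
      have e3 : 1 / (16 * (1 - (i - u) / (M : ℝ)) ^ 4) =
          (M : ℝ) ^ 4 / 16 * (1 / (M + u - i) ^ 4) := by
        have h3 : (M : ℝ) + u - i ≠ 0 := by linarith
        have : 1 - (i - u) / (M : ℝ) = (M + u - i) / M := by field_simp; ring
        rw [this]
        field_simp
      rw [e2, e3, ← mul_add]
      refine mul_le_mul_of_nonneg_left (add_le_add ?_ ?_) (by positivity)
      · rw [one_div_mul_one_div]
        have : 0 < (i : ℝ) - L + 1 := by linarith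
        refine one_div_le_one_div_of_le (by positivity) ?_
        calc ((L : ℝ) - u) ^ 2 * ((i : ℝ) - L + 1) ^ 2 ≤ (i - u) ^ 2 * (i - u) ^ 2 := by
              gcongr; linarith
          _ = _ := by ring
      · rw [one_div_mul_one_div]
        have : 0 < (M : ℝ) - i := by linarith
        refine one_div_le_one_div_of_le (by positivity) ?_
        calc (u + 1) ^ 2 * ((M : ℝ) - i) ^ 2 ≤ (M + u - i) ^ 2 * (M + u - i) ^ 2 := by
              gcongr <;> linarith
          _ = _ := by ring
    refine (Finset.sum_le_sum h1).trans ?_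
    rw [← Finset.mul_sum, Finset.sum_add_distrib, ← Finset.mul_sum, ← Finset.mul_sum]
    have s1 : ∑ i ∈ Finset.Ico L M, 1 / ((i : ℝ) - L + 1) ^ 2 ≤ 2 := by
      rw [Finset.sum_Ico_eq_sum_range]
      refine le_trans (le_of_eq ?_) (sum_inv_sq_le (M - L))
      refine Finset.sum_congr rfl fun i _ => ?_
      push_cast; congr 2; ring
    have s2 : ∑ i ∈ Finset.Ico L M, 1 / ((M : ℝ) - i) ^ 2 ≤ 2 := by
      refine le_trans ?_ (sum_inv_sq_le' M)
      refine Finset.sum_le_sum_of_subset_of_nonneg ?_ fun _ _ _ => by positivity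
      intro i hi
      rw [Finset.mem_Ico] at hi; exact Finset.mem_range.2 hi.2
    calc _ ≤ (M : ℝ) ^ 4 / 16 * (1 / (L - u) ^ 2 * 2 + 1 / (u + 1) ^ 2 * 2) := by gcongr
      _ = _ := by rw [hB]; ring
  have good : (M : ℝ) ^ 4 / 8 * B ≤ ∑ i ∈ Finset.range L,
      32768 * (1 / ((i : ℝ) + 1) ^ 2 + 1 / ((L : ℝ) - i) ^ 2) * ‖P n ((u - i) / M)‖ ^ 4 := by
    -- The lattice point just to the left of `u` alone suffices, by the lower bound `le_norm_P`.
    have hf1 := Nat.floor_le hu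
    have hf2 := Nat.lt_floor_add_one u
    set j := ⌊u⌋₊
    have hjL : j < L := by
      have : (j : ℝ) < L := by linarith
      exact_mod_cast this
    refine le_trans ?_ (Finset.single_le_sum (f := fun i : ℕ =>
      32768 * (1 / ((i : ℝ) + 1) ^ 2 + 1 / ((L : ℝ) - i) ^ 2) * ‖P n ((u - i) / M)‖ ^ 4)
      (fun i _ => by positivity) (Finset.mem_range.2 hjL))
    have k1 : (n : ℝ) / 2 ≤ ‖P n ((u - j) / M)‖ := by
      refine le_norm_P n (div_nonneg (by linarith) hM0.le) ?_
      rw [← hM', mul_div_cancel₀ _ hM0.ne']; linarith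
    have k2 : B / 4 ≤ 1 / ((j : ℝ) + 1) ^ 2 + 1 / ((L : ℝ) - j) ^ 2 := by
      have q1 : 1 / (u + 1) ^ 2 ≤ 1 / ((j : ℝ) + 1) ^ 2 := by gcongr
      have hLj : 0 < (L : ℝ) - j := by linarith
      have q2 : 1 / (2 * (L - u)) ^ 2 ≤ 1 / ((L : ℝ) - j) ^ 2 := by gcongr; linarith
      have q3 : 1 / (2 * (L - u)) ^ 2 = 1 / (L - u) ^ 2 / 4 := by field_simp; norm_num
      have q4 : 0 ≤ 1 / (u + 1) ^ 2 := by positivity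
      rw [hB]; linarith
    have hB0 : 0 ≤ B := by positivity
    calc (M : ℝ) ^ 4 / 8 * B = 32768 * (B / 4) * ((n : ℝ) / 2) ^ 4 := by rw [hM']; ring
      _ ≤ _ := by gcongr
  have split : ∑ i ∈ Finset.range L, wt L i * ‖P n ((u - i) / M)‖ ^ 4 =
      ∑ i ∈ Finset.range L, ‖P n ((u - i) / M)‖ ^ 4 + ∑ i ∈ Finset.range L,
      32768 * (1 / ((i : ℝ) + 1) ^ 2 + 1 / ((L : ℝ) - i) ^ 2) * ‖P n ((u - i) / M)‖ ^ 4 := by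
    rw [← Finset.sum_add_distrib]
    refine Finset.sum_congr rfl fun i _ => ?_
    unfold wt; ring
  rw [split]
  linarith

/-! ### Fourier coefficients of the majorant -/

/-- The exponential sum of the weights over the lattice points `(A + i) / M`, `i < L`; multiplied by
`r h` it is the `h`-th Fourier coefficient of the majorant. -/
noncomputable def W (L M : ℕ) (A : ℝ) (h : ℤ) : ℂ :=
  ∑ i ∈ Finset.range L, (wt L i : ℂ) * e (h * (-(A + i) / M))

lemma sum_wt_sub_one (L : ℕ) : ∑ i ∈ Finset.range L, (wt L i - 1) ≤ 131072 := by
  have : ∑ i ∈ Finset.range L, (wt L i - 1) = 32768 *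
      (∑ i ∈ Finset.range L, 1 / ((i : ℝ) + 1) ^ 2 +
        ∑ i ∈ Finset.range L, 1 / ((L : ℝ) - i) ^ 2) := by
    rw [← Finset.sum_add_distrib, Finset.mul_sum]
    refine Finset.sum_congr rfl fun i _ => ?_
    unfold wt; ring
  linarith [sum_inv_sq_le L, sum_inv_sq_le' L]

lemma one_le_wt (L i : ℕ) : 1 ≤ wt L i := by
  unfold wt
  have : 0 ≤ 32768 * (1 / ((i : ℝ) + 1) ^ 2 + 1 / ((L : ℝ) - i) ^ 2) := by positivity
  linarith

lemma norm_W_zero (L M : ℕ) (A : ℝ) : ‖W L M A 0‖ ≤ L + 131072 := by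
  unfold W
  refine (norm_sum_le _ _).trans ?_
  have h1 : ∀ i ∈ Finset.range L,
      ‖(wt L i : ℂ) * e (((0 : ℤ) : ℝ) * (-(A + i) / M))‖ = 1 + (wt L i - 1) := by
    intro i _
    rw [norm_mul, norm_e, Complex.norm_real, Real.norm_eq_abs,
      abs_of_nonneg (by linarith [one_le_wt L i])]
    ring
  rw [Finset.sum_congr rfl h1, Finset.sum_add_distrib]
  have := sum_wt_sub_one L
  simp only [Finset.sum_const, Finset.card_range, nsmul_eq_mul, mul_one]
  linarith

/-- The unweighted part of `W` is a geometric sum, of size at most `M / (2h)`; the surplus weights have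
bounded sum, which is at most a constant times `M / h`. -/
lemma norm_W_le (L M : ℕ) (A : ℝ) (h : ℕ) (h0 : 0 < h) (hM : 4 * h ≤ M) :
    ‖W L M A h‖ ≤ 40000 * M / h := by
  have h0' : (0 : ℝ) < h := by exact_mod_cast h0
  have hM' : 4 * (h : ℝ) ≤ M := by exact_mod_cast hM
  have hM0 : (0 : ℝ) < M := by linarith
  have split : W L M A h = e (h * (-A / M)) * P L (-(h / M)) +
      ∑ i ∈ Finset.range L, ((wt L i - 1 : ℝ) : ℂ) * e (h * (-(A + i) / M)) := by
    unfold W P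
    rw [Finset.mul_sum, ← Finset.sum_add_distrib]
    refine Finset.sum_congr rfl fun i _ => ?_
    have : e (h * (-(A + i) / M)) = e (h * (-A / M)) * e (i * (-(h / M))) := by
      rw [← e_add]; congr 1; ring
    rw [← this]; push_cast; ring
  have b1 : ‖P L (h / M)‖ ≤ M / (2 * h) := by
    have := norm_P_mul_le L (t := h / M) (by positivity)
      (by rw [div_le_div_iff₀ hM0 (by norm_num)]; linarith)
    rw [le_div_iff₀ (by positivity)]
    calc ‖P L (h / M)‖ * (2 * h) = ‖P L (h / M)‖ * (2 * (h / M)) * M := by field_simp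
      _ ≤ 1 * M := by gcongr
      _ = M := one_mul _
  have b2 : ‖∑ i ∈ Finset.range L, ((wt L i - 1 : ℝ) : ℂ) * e (h * (-(A + i) / M))‖ ≤ 131072 := by
    refine (norm_sum_le _ _).trans (le_trans (le_of_eq ?_) (sum_wt_sub_one L))
    refine Finset.sum_congr rfl fun i _ => ?_
    rw [norm_mul, norm_e, Complex.norm_real, Real.norm_eq_abs,
      abs_of_nonneg (by linarith [one_le_wt L i]), mul_one]
  rw [split]
  refine (norm_add_le _ _).trans ?_
  rw [norm_mul, norm_e, one_mul, norm_P_neg]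
  have b3 : (4 : ℝ) ≤ M / h := by rw [le_div_iff₀ h0']; exact hM'
  have b4 : (M : ℝ) / (2 * h) = M / h / 2 := by field_simp
  rw [mul_div_assoc]
  linarith

lemma norm_W_neg (L M : ℕ) (A : ℝ) (h : ℤ) : ‖W L M A (-h)‖ = ‖W L M A h‖ := by
  rw [← Complex.norm_conj (W L M A h)]
  unfold W
  rw [map_sum]
  congr 1
  refine Finset.sum_congr rfl fun i _ => ?_
  rw [map_mul, conj_e, Complex.conj_ofReal]
  congr 2; push_cast; ring

/-- The exponential sum `∑_{k = 1}^N e(h x_k)` over the given points. -/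
noncomputable def S (N : ℕ) (x : ℕ → ℝ) (h : ℤ) : ℂ := ∑ n ∈ Finset.Icc 1 N, e (h * x n)

lemma norm_S_neg (N : ℕ) (x : ℕ → ℝ) (h : ℤ) : ‖S N x (-h)‖ = ‖S N x h‖ := by
  rw [← Complex.norm_conj (S N x h)]
  unfold S
  rw [map_sum]
  congr 1
  refine Finset.sum_congr rfl fun i _ => ?_
  rw [conj_e]
  congr 1; push_cast; ring

/-- The sum of the majorant over the points, estimated through its Fourier expansion: the frequency
`0` gives the first term, and the frequencies `±h` together give the second. -/
lemma sum_majorant_le (n m L M N : ℕ) (A : ℝ) (r : ℤ → ℝ) (hr0 : ∀ h, 0 ≤ r h ∧ r h ≤ (n : ℝ) ^ 3)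
    (hr : ∀ t : ℝ, ((‖P n t‖ ^ 4 : ℝ) : ℂ) =
        ∑ h ∈ Finset.Icc (-(m : ℤ)) m, (r h : ℂ) * e (h * t)) (x : ℕ → ℝ) (hM0 : 0 < M)
    (hM : 4 * m ≤ M) :
    ∑ k ∈ Finset.Icc 1 N, ∑ i ∈ Finset.range L, wt L i * ‖P n ((M * x k - A - i) / M)‖ ^ 4 ≤
      r 0 * (L + 131072) * N +
        80000 * n ^ 3 * M * ∑ h ∈ Finset.Icc 1 m, 1 / (h : ℝ) * ‖S N x h‖ := by
  have hM1 : (M : ℝ) ≠ 0 := by positivity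
  have key : ((∑ k ∈ Finset.Icc 1 N, ∑ i ∈ Finset.range L,
      wt L i * ‖P n ((M * x k - A - i) / M)‖ ^ 4 : ℝ) : ℂ) =
      ∑ h ∈ Finset.Icc (-(m : ℤ)) m, (r h : ℂ) * (W L M A h * S N x h) := by
    have h1 : ∀ k ∈ Finset.Icc 1 N, ∀ i ∈ Finset.range L,
        ((wt L i * ‖P n ((M * x k - A - i) / M)‖ ^ 4 : ℝ) : ℂ) =
        ∑ h ∈ Finset.Icc (-(m : ℤ)) m,
          (r h : ℂ) * ((wt L i * e (h * (-(A + i) / M))) * e (h * x k)) := by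
      intro k _ i _
      rw [Complex.ofReal_mul, hr, Finset.mul_sum]
      refine Finset.sum_congr rfl fun h _ => ?_
      rw [mul_assoc (wt L i : ℂ), ← e_add]
      have : (h : ℝ) * ((M * x k - A - i) / M) = h * (-(A + i) / M) + h * x k := by
        field_simp; ring
      rw [this]; ring
    rw [Complex.ofReal_sum]
    simp_rw [Complex.ofReal_sum]
    rw [Finset.sum_congr rfl fun k hk => Finset.sum_congr rfl (h1 k hk)]
    rw [Finset.sum_congr rfl fun k _ => Finset.sum_comm, Finset.sum_comm]
    refine Finset.sum_congr rfl fun h _ => ?_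
    unfold W S
    rw [Finset.sum_mul_sum, Finset.mul_sum, Finset.sum_comm]
    simp_rw [Finset.mul_sum]
  have nn : ∀ k ∈ Finset.Icc 1 N, 0 ≤ ∑ i ∈ Finset.range L,
      wt L i * ‖P n ((M * x k - A - i) / M)‖ ^ 4 := fun k _ =>
    Finset.sum_nonneg fun i _ => mul_nonneg (by linarith [one_le_wt L i]) (by positivity)
  rw [← abs_of_nonneg (Finset.sum_nonneg nn), ← Real.norm_eq_abs, ← Complex.norm_real, key]
  refine (norm_sum_le _ _).trans ?_
  set g : ℤ → ℝ := fun h => if h = 0 then r 0 * (L + 131072) * N else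
    (n : ℝ) ^ 3 * (‖W L M A h‖ * ‖S N x h‖) with hg
  have gle : ∀ h ∈ Finset.Icc (-(m : ℤ)) m, ‖(r h : ℂ) * (W L M A h * S N x h)‖ ≤ g h := by
    intro h _
    rw [norm_mul, norm_mul, Complex.norm_real, Real.norm_eq_abs, abs_of_nonneg (hr0 h).1]
    simp only [hg]
    split_ifs with hh
    · subst hh
      rw [mul_assoc]
      have hS : ‖S N x 0‖ = N := by simp [S, e_zero]
      rw [hS]
      exact mul_le_mul_of_nonneg_left
        (mul_le_mul_of_nonneg_right (norm_W_zero L M A) (Nat.cast_nonneg N)) (hr0 0).1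
    · exact mul_le_mul_of_nonneg_right (hr0 h).2 (by positivity)
  refine (Finset.sum_le_sum gle).trans ?_
  have geven : g.Even := by
    intro h
    simp only [hg, neg_eq_zero, norm_W_neg, norm_S_neg]
  rw [Finset.sum_Icc_of_even_eq_range geven, Finset.sum_range_succ']
  have g0 : g 0 = r 0 * (L + 131072) * N := by simp [hg]
  have hs : ∑ h ∈ Finset.range m, g ((h + 1 : ℕ) : ℤ) ≤
      40000 * n ^ 3 * M * ∑ h ∈ Finset.Icc 1 m, 1 / (h : ℝ) * ‖S N x h‖ := by
    rw [Finset.mul_sum, Finset.range_eq_Ico, Finset.sum_Ico_add' (fun h : ℕ => g h) 0 m 1]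
    refine le_of_eq_of_le (b := ∑ h ∈ Finset.Icc 1 m, g h)
      (Finset.sum_congr (by ext; simp) fun _ _ => rfl) (Finset.sum_le_sum fun h hh => ?_)
    rw [Finset.mem_Icc] at hh
    have := norm_W_le L M A h (by omega) (by omega)
    have hne : (h : ℤ) ≠ 0 := by omega
    simp only [hg, if_neg hne]
    calc (n : ℝ) ^ 3 * (‖W L M A h‖ * ‖S N x h‖)
        ≤ (n : ℝ) ^ 3 * (40000 * M / h * ‖S N x h‖) := by gcongr
      _ = _ := by ring
  rw [Nat.cast_zero, g0, two_nsmul]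
  linarith

/-! ### Counting points in arcs -/

/-- The upper bound for the number of points in the arc `[α, β]` modulo `1`. The set `s` may be any set
of indices whose points lie in the arc, and the arc may wrap around. -/
lemma count_le (N : ℕ) (hN : 0 < N) (x : ℕ → ℝ) (m : ℕ) (hm : 0 < m) (α β : ℝ) (hαβ : α ≤ β)
    (s : Finset ℕ) (hs : s ⊆ Finset.Icc 1 N)
    (hmem : ∀ k ∈ s, ∃ z : ℤ, α ≤ x k + z ∧ x k + z ≤ β) :
    (s.card : ℝ) / N ≤ (β - α) + 640000 * (1 / m + ∑ h ∈ Finset.Icc 1 m, 1 / (h : ℝ) *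
      ‖(1 / (N : ℂ)) * S N x h‖) := by
  have hN0 : (0 : ℝ) < N := by exact_mod_cast hN
  have hm0 : (0 : ℝ) < m := by exact_mod_cast hm
  set n := m / 2 + 1 with hn
  set M := 8 * n with hMdef
  have hmM : 4 * m ≤ M := by omega
  have hmM' : 4 * (m : ℝ) ≤ M := by exact_mod_cast hmM
  have hM0 : (0 : ℝ) < M := by linarith
  have hM' : (M : ℝ) = 8 * n := by rw [hMdef]; push_cast; ring
  have hn0 : (0 : ℝ) < n := by positivity
  have hsum : ∑ h ∈ Finset.Icc 1 m, 1 / (h : ℝ) * ‖(1 / (N : ℂ)) * S N x h‖ =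
      (∑ h ∈ Finset.Icc 1 m, 1 / (h : ℝ) * ‖S N x h‖) / N := by
    rw [Finset.sum_div]
    refine Finset.sum_congr rfl fun h _ => ?_
    rw [norm_mul]; simp; ring
  rw [hsum]
  set T := ∑ h ∈ Finset.Icc 1 m, 1 / (h : ℝ) * ‖S N x h‖ with hT
  have hT0 : 0 ≤ T := Finset.sum_nonneg fun _ _ => by positivity
  set A : ℤ := ⌊M * α⌋ with hA
  set B : ℤ := ⌈M * β⌉ with hB
  have hA1 : (A : ℝ) ≤ M * α := Int.floor_le _
  have hA2 : M * α < A + 1 := Int.lt_floor_add_one _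
  have hB1 : M * β ≤ B := Int.le_ceil _
  have hB2 : (B : ℝ) < M * β + 1 := Int.ceil_lt_add_one _
  have hMαβ : (M : ℝ) * α ≤ M * β := by gcongr
  have hAB : A ≤ B := by
    have : (A : ℝ) ≤ B := by linarith
    exact_mod_cast this
  obtain ⟨L, hL⟩ : ∃ L : ℕ, (L : ℤ) = B - A + 1 := ⟨(B - A + 1).toNat, by omega⟩
  have hL' : (L : ℝ) = B - A + 1 := by exact_mod_cast hL
  have hMm : 1 / (M : ℝ) ≤ 1 / m / 4 := by
    rw [div_div]; exact one_div_le_one_div_of_le (by positivity) (by linarith)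
  have hLM : (L : ℝ) / M ≤ β - α + 3 * (1 / M) := by
    rw [div_le_iff₀ hM0]
    have : (β - α + 3 * (1 / M)) * M = M * β - M * α + 3 := by field_simp
    rw [this]; linarith
  have hTN : 0 ≤ T / N := by positivity
  have hm1 : 0 < 1 / (m : ℝ) := by positivity
  rcases le_or_gt L M with hle | hgt
  swap
  -- If the lattice points cover the circle, the arc has length at least `1 - 3 / M` and the bound
  -- is trivial.
  · have h1 : (s.card : ℝ) / N ≤ 1 := by
      rw [div_le_one hN0]
      have := Finset.card_le_card hs
      rw [Nat.card_Icc] at this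
      exact_mod_cast this
    have h2 : 1 ≤ (L : ℝ) / M := by
      rw [le_div_iff₀ hM0, one_mul]; exact_mod_cast hgt.le
    linarith
  obtain ⟨r, hr0, hr⟩ := kernel_expansion n m (by omega) (by omega)
  have lower : (M * r 0) * s.card ≤ ∑ k ∈ Finset.Icc 1 N, ∑ i ∈ Finset.range L,
      wt L i * ‖P n ((M * x k - A - i) / M)‖ ^ 4 := by
    refine le_trans ?_ (Finset.sum_le_sum_of_subset_of_nonneg hs fun k _ _ =>
      Finset.sum_nonneg fun i _ => mul_nonneg (by linarith [one_le_wt L i]) (by positivity))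
    rw [mul_comm, ← nsmul_eq_mul]
    refine Finset.card_nsmul_le_sum _ _ _ fun k hk => ?_
    obtain ⟨z, hz1, hz2⟩ := hmem k hk
    have hz1' : (M : ℝ) * α ≤ M * (x k + z) := by gcongr
    have hz2' : (M : ℝ) * (x k + z) ≤ M * β := by gcongr
    rw [← sum_kernel n m M (by omega) r hr (M * (x k + z) - A)]
    refine (majorant n L (by omega) hle (M * (x k + z) - A) (by linarith) (by linarith)).trans
      (le_of_eq (Finset.sum_congr rfl fun i _ => ?_))
    rw [← hMdef, ← P_add_int n ((M * x k - A - i) / M) z]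
    congr 4; field_simp; ring
  have upper := sum_majorant_le n m L M N A r hr0 hr x (by omega) hmM
  -- The peak `|P n 0|⁴ = n⁴` is one of the terms adding up to `M r(0) = 8 n r(0)`.
  have r0 : (n : ℝ) ^ 3 ≤ 8 * r 0 := by
    have h1 := sum_kernel n m M (by omega) r hr 0
    have h2 := Finset.single_le_sum (f := fun i : ℕ => ‖P n ((0 - i) / M)‖ ^ 4)
      (fun i _ => by positivity) (Finset.mem_range.2 (show 0 < M by omega))
    rw [h1] at h2
    have h3 : P n 0 = n := by simp [P, e_zero]
    simp only [Nat.cast_zero, sub_zero, zero_div, h3, Complex.norm_natCast, hM'] at h2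
    have h4 : (n : ℝ) * n ^ 3 ≤ n * (8 * r 0) := by linarith
    exact le_of_mul_le_mul_left h4 hn0
  have r0pos : 0 < r 0 := by
    have : 0 < (n : ℝ) ^ 3 := by positivity
    linarith
  have main : (M * r 0) * s.card ≤ (M * r 0) * ((L + 131072) / M * N + 640000 * T) := by
    calc (M * r 0) * s.card ≤ r 0 * (L + 131072) * N + 80000 * n ^ 3 * M * T :=
          lower.trans upper
      _ ≤ r 0 * (L + 131072) * N + 80000 * (8 * r 0) * M * T := by gcongr
      _ = _ := by field_simp; ring
  have main2 := le_of_mul_le_mul_left main (by positivity)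
  calc (s.card : ℝ) / N ≤ ((L + 131072) / M * N + 640000 * T) / N := by gcongr
    _ = L / M + 131072 * (1 / M) + 640000 * (T / N) := by field_simp
    _ ≤ _ := by linarith

/-- The Erdős–Turán inequality: there is an absolute constant `C` such that for any
reals `x_1, …, x_N` and any positive integer `m`, the discrepancy of the fractional
parts with respect to every interval `[a,b] ⊆ [0,1]` is at most
`C (1/m + ∑_{h=1}^m (1/h) |(1/N) ∑_{n=1}^N e^{2πi h x_n}|)`. -/
theorem erdos_turan :
    ∃ C : ℝ, 0 < C ∧ ∀ (N : ℕ), 0 < N → ∀ (x : ℕ → ℝ) (m : ℕ), 0 < m →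
      ∀ a b : ℝ, 0 ≤ a → a ≤ b → b ≤ 1 →
        |(b - a) - (((Finset.range N).filter
            (fun n => Int.fract (x (n + 1)) ∈ Set.Icc a b)).card : ℝ) / N| ≤
          C * (1 / m + ∑ h ∈ Finset.Icc 1 m, (1 / (h : ℝ)) *
            ‖(1 / (N : ℂ)) * ∑ n ∈ Finset.Icc 1 N,
              Complex.exp (2 * π * Complex.I * (h : ℂ) * (x n : ℂ))‖) := by
  refine ⟨640000, by norm_num, fun N hN x m hm a b ha hab hb => ?_⟩
  have hN0 : (0 : ℝ) < N := by exact_mod_cast hN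
  have hS : ∀ h : ℕ, ∑ n ∈ Finset.Icc 1 N,
      Complex.exp (2 * π * Complex.I * (h : ℂ) * (x n : ℂ)) = S N x h := by
    intro h
    unfold S e
    refine Finset.sum_congr rfl fun n _ => ?_
    congr 1; push_cast; ring
  simp_rw [hS]
  have hcard : ((Finset.range N).filter (fun n => Int.fract (x (n + 1)) ∈ Set.Icc a b)).card =
      ((Finset.Icc 1 N).filter (fun n => Int.fract (x n) ∈ Set.Icc a b)).card := by
    refine Finset.card_bij (fun n _ => n + 1) ?_ (fun _ _ _ _ h => Nat.succ_injective h) ?_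
    · intro n hn
      simp only [Finset.mem_filter, Finset.mem_range, Finset.mem_Icc] at hn ⊢
      exact ⟨by omega, hn.2⟩
    · intro n hn
      simp only [Finset.mem_filter, Finset.mem_Icc] at hn
      obtain ⟨k, rfl⟩ : ∃ k, n = k + 1 := ⟨n - 1, by omega⟩
      exact ⟨k, by simp only [Finset.mem_filter, Finset.mem_range]; exact ⟨by omega, hn.2⟩, rfl⟩
  rw [hcard]
  have inside := count_le N hN x m hm a b hab
    ((Finset.Icc 1 N).filter (fun n => Int.fract (x n) ∈ Set.Icc a b)) (Finset.filter_subset _ _)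
    (fun k hk => ⟨-⌊x k⌋, by
      have h := (Finset.mem_filter.1 hk).2
      have hf : x k + ((-⌊x k⌋ : ℤ) : ℝ) = Int.fract (x k) := by
        rw [← Int.self_sub_floor]; push_cast; ring
      rw [hf]; exact h⟩)
  have outside := count_le N hN x m hm b (a + 1) (by linarith)
    ((Finset.Icc 1 N).filter (fun n => ¬ Int.fract (x n) ∈ Set.Icc a b)) (Finset.filter_subset _ _)
    (fun k hk => by
      have h := (Finset.mem_filter.1 hk).2
      have f0 := Int.fract_nonneg (x k)
      have f1 := Int.fract_lt_one (x k)
      have hf := Int.self_sub_floor (x k)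
      rw [Set.mem_Icc, not_and_or, not_le, not_le] at h
      rcases h with h | h
      · refine ⟨-⌊x k⌋ + 1, ?_, ?_⟩ <;> push_cast <;> linarith
      · refine ⟨-⌊x k⌋, ?_, ?_⟩ <;> push_cast <;> linarith)
  have total : (((Finset.Icc 1 N).filter (fun n => Int.fract (x n) ∈ Set.Icc a b)).card : ℝ) / N +
      (((Finset.Icc 1 N).filter (fun n => ¬ Int.fract (x n) ∈ Set.Icc a b)).card : ℝ) / N = 1 := by
    rw [← add_div, div_eq_one_iff_eq hN0.ne']
    have := Finset.card_filter_add_card_filter_not (s := Finset.Icc 1 N)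
      (fun n => Int.fract (x n) ∈ Set.Icc a b)
    rw [Nat.card_Icc] at this
    exact_mod_cast this
  rw [abs_le]
  constructor <;> linarith
end
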